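/- arXiv:2211.02110 — 2 statements merged into one kernel-verified Lean document; each statement's English description precedes it below -/
import Mathlib

section
/- Let x = (q, h_swr, ω, δ, h_ga) ∈ ℝ⁴ × ℝ^m × ℝ³ × ℝ^m × ℝ^m with q ≠ 0, and suppose J_st(δ) is invertible. Let h̄ := J_st(δ) ω + A_s(δ) h_swr + A_g h_ga, and let Z(x) be the 4 × (3m+7) matrix whose first row is [qᵀ/‖q‖, 0, 0, 0, 0] (blocks corresponding to q, h_swr, ω, δ, h_ga) and whose remaining three rows form the block matrix [2[h̄, −ĥ̄] O_L(q*), A_s(δ), J_st(δ), D(ω, δ, h_swr), A_g], where [h̄, −ĥ̄] is the 3×4 matrix with first column h̄ and remaining 3×3 block −ĥ̄. Then the four rows of Z(x) are linearly independent, i.e. Z(x) has rank 4. -/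
open Matrix

noncomputable section

/-- The vector (imaginary) part of a quaternion, as a vector in `ℝ³`. -/
def qv (q : Quaternion ℝ) : Fin 3 → ℝ := ![q.imI, q.imJ, q.imK]

/-- The identification of a quaternion with the 4-vector `[q_s; q_v]`. -/
def qvec (q : Quaternion ℝ) : Fin 4 → ℝ := ![q.re, q.imI, q.imJ, q.imK]

/-- The hat operator: the skew-symmetric matrix of the cross product, `hat ω *ᵥ v = ω ×₃ v`. -/
def hat (ω : Fin 3 → ℝ) : Matrix (Fin 3) (Fin 3) ℝ :=
  !![0, -ω 2, ω 1; ω 2, 0, -ω 0; -ω 1, ω 0, 0]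

/-- The matrix of quaternion multiplication from the left:
`O_L(q) = [[q_s, −q_vᵀ], [q_v, q_s I₃ + q̂_v]]`. -/
def OL (q : Quaternion ℝ) : Matrix (Fin 4) (Fin 4) ℝ :=
  Matrix.reindex finSumFinEquiv finSumFinEquiv
    (Matrix.fromBlocks
      (Matrix.of fun _ _ => q.re)
      (Matrix.of fun _ j => -(qv q j))
      (Matrix.of fun i _ => qv q i)
      (q.re • (1 : Matrix (Fin 3) (Fin 3) ℝ) + hat (qv q)))

/-- The matrix of quaternion multiplication from the right:
`O_R(p) = [[p_s, −p_vᵀ], [p_v, p_s I₃ − p̂_v]]`. -/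
def OR (p : Quaternion ℝ) : Matrix (Fin 4) (Fin 4) ℝ :=
  Matrix.reindex finSumFinEquiv finSumFinEquiv
    (Matrix.fromBlocks
      (Matrix.of fun _ _ => p.re)
      (Matrix.of fun _ j => -(qv p j))
      (Matrix.of fun i _ => qv p i)
      (p.re • (1 : Matrix (Fin 3) (Fin 3) ℝ) - hat (qv p)))

variable {m : ℕ}

/-- Spin axes of a CMG array at gimbal angles `δ`:
`A_s(δ) = A_{s0} diag(cos δ) − A_{t0} diag(sin δ)`. -/
def Asf (As0 At0 : Matrix (Fin 3) (Fin m) ℝ) (δ : Fin m → ℝ) : Matrix (Fin 3) (Fin m) ℝ :=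
  As0 * Matrix.diagonal (fun i => Real.cos (δ i)) - At0 * Matrix.diagonal (fun i => Real.sin (δ i))

/-- Transverse axes of a CMG array at gimbal angles `δ`:
`A_t(δ) = A_{t0} diag(cos δ) + A_{s0} diag(sin δ)`. -/
def Atf (As0 At0 : Matrix (Fin 3) (Fin m) ℝ) (δ : Fin m → ℝ) : Matrix (Fin 3) (Fin m) ℝ :=
  At0 * Matrix.diagonal (fun i => Real.cos (δ i)) + As0 * Matrix.diagonal (fun i => Real.sin (δ i))

/-- The actuator Jacobian (relative wheel momenta form):
`D(ω, δ, h_swr) = [A_s diag(A_tᵀω) + A_t diag(A_sᵀω)](𝐉_t − 𝐉_s) − A_t diag(h_swr)`. -/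
def Dmat (As0 At0 : Matrix (Fin 3) (Fin m) ℝ) (Js Jt : Matrix (Fin m) (Fin m) ℝ)
    (ω : Fin 3 → ℝ) (δ hswr : Fin m → ℝ) : Matrix (Fin 3) (Fin m) ℝ :=
  (Asf As0 At0 δ * Matrix.diagonal ((Atf As0 At0 δ)ᵀ *ᵥ ω) +
      Atf As0 At0 δ * Matrix.diagonal ((Asf As0 At0 δ)ᵀ *ᵥ ω)) * (Jt - Js) -
    Atf As0 At0 δ * Matrix.diagonal hswr

/-- The actuator Jacobian (absolute wheel momenta form):
`D_a(ω, δ, h_swa) = [A_s diag(A_tᵀω) + A_t diag(A_sᵀω)](𝐉_t − 𝐉_sg) − A_t diag(h_swa)`. -/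
def Damat (As0 At0 : Matrix (Fin 3) (Fin m) ℝ) (Jsg Jt : Matrix (Fin m) (Fin m) ℝ)
    (ω : Fin 3 → ℝ) (δ hswa : Fin m → ℝ) : Matrix (Fin 3) (Fin m) ℝ :=
  (Asf As0 At0 δ * Matrix.diagonal ((Atf As0 At0 δ)ᵀ *ᵥ ω) +
      Atf As0 At0 δ * Matrix.diagonal ((Asf As0 At0 δ)ᵀ *ᵥ ω)) * (Jt - Jsg) -
    Atf As0 At0 δ * Matrix.diagonal hswa

/-- A variable total moment of inertia `J + A_s(δ) Js A_s(δ)ᵀ + A_t(δ) Jt A_t(δ)ᵀ`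
(this gives `J_st(δ)` for `Js = 𝐉_s` and `J_{st,a}(δ)` for `Js = 𝐉_sg`). -/
def Jstf (As0 At0 : Matrix (Fin 3) (Fin m) ℝ) (J : Matrix (Fin 3) (Fin 3) ℝ)
    (Js Jt : Matrix (Fin m) (Fin m) ℝ) (δ : Fin m → ℝ) : Matrix (Fin 3) (Fin 3) ℝ :=
  J + Asf As0 At0 δ * Js * (Asf As0 At0 δ)ᵀ + Atf As0 At0 δ * Jt * (Atf As0 At0 δ)ᵀ

/-- The 3×4 matrix `[h̄, −ĥ̄]` with first column `h̄` and remaining 3×3 block `−ĥ̄`. -/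
def Hmat (hb : Fin 3 → ℝ) : Matrix (Fin 3) (Fin 4) ℝ :=
  Matrix.of fun i => Fin.cons (hb i) (fun j => -(hat hb i j))

/-- for a state `x = (q, h_swr, ω, δ, h_ga)` with `q ≠ 0` and `J_st(δ)`
invertible, the constraint Jacobian `Z(x)`, whose first row is `[qᵀ/‖q‖, 0, 0, 0, 0]`
and whose remaining three rows are `[2[h̄, −ĥ̄] O_L(q*), A_s(δ), J_st(δ), D(ω, δ, h_swr), A_g]`,
has linearly independent rows, i.e. rank 4. -/
theorem constraint_jacobian_full_rank
    {m : ℕ} (As0 At0 Ag : Matrix (Fin 3) (Fin m) ℝ)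
    (ds dt : Fin m → ℝ) (J : Matrix (Fin 3) (Fin 3) ℝ)
    (q : Quaternion ℝ) (hq : q ≠ 0)
    (hswr δ hga : Fin m → ℝ) (ω : Fin 3 → ℝ)
    (hJst : IsUnit (Jstf As0 At0 J (Matrix.diagonal ds) (Matrix.diagonal dt) δ))
    (hb : Fin 3 → ℝ)
    (hhb : hb = Jstf As0 At0 J (Matrix.diagonal ds) (Matrix.diagonal dt) δ *ᵥ ω +
      Asf As0 At0 δ *ᵥ hswr + Ag *ᵥ hga)
    (Z : Matrix (Fin 1 ⊕ Fin 3) (Fin 4 ⊕ (Fin m ⊕ (Fin 3 ⊕ (Fin m ⊕ Fin m)))) ℝ)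
    (hZ : Z = Matrix.of (Sum.elim
      -- first row: [qᵀ/‖q‖, 0, 0, 0, 0]
      (fun _ : Fin 1 => Sum.elim (fun j => qvec q j / ‖q‖) 0)
      -- remaining three rows: [2[h̄, −ĥ̄]O_L(q*), A_s(δ), J_st(δ), D(ω, δ, h_swr), A_g]
      (fun i : Fin 3 => Sum.elim
        (fun j => ((2 : ℝ) • (Hmat hb * OL (star q))) i j)
        (Sum.elim (fun j => Asf As0 At0 δ i j)
          (Sum.elim
            (fun j => Jstf As0 At0 J (Matrix.diagonal ds) (Matrix.diagonal dt) δ i j)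
            (Sum.elim
              (fun j => Dmat As0 At0 (Matrix.diagonal ds) (Matrix.diagonal dt) ω δ hswr i j)
              (fun j => Ag i j))))))) :
    LinearIndependent ℝ (fun i => Z i) ∧ Z.rank = 4 := by
  have hli : LinearIndependent ℝ (fun i => Z i) := by
    rw [Fintype.linearIndependent_iff]
    intro g hg
    have h3 : (fun i => g (Sum.inr i)) ᵥ*
        Jstf As0 At0 J (Matrix.diagonal ds) (Matrix.diagonal dt) δ = 0 := by
      funext j
      have h := congrFun hg (Sum.inr (Sum.inr (Sum.inl j)))
      rw [Finset.sum_apply, Fintype.sum_sum_type] at h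
      simpa [hZ, Matrix.vecMul, dotProduct] using h
    have h4 : (fun i => g (Sum.inr i)) = 0 :=
      Matrix.vecMul_injective_of_isUnit hJst (by simpa using h3)
    have h5 : ∀ i, g (Sum.inr i) = 0 := fun i => congrFun h4 i
    have h6 : ∀ j, g (Sum.inl 0) * (qvec q j / ‖q‖) = 0 := by
      intro j
      have h := congrFun hg (Sum.inl j)
      rw [Finset.sum_apply, Fintype.sum_sum_type] at h
      simpa only [hZ, h5, zero_smul, Pi.zero_apply, Finset.sum_const_zero, add_zero,
        Finset.univ_unique, Finset.sum_singleton, Fin.default_eq_zero, Pi.smul_apply,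
        Matrix.of_apply, Sum.elim_inl, smul_eq_mul, zero_mul] using h
    have h7 : g (Sum.inl 0) = 0 := by
      by_contra hne
      have hn : ‖q‖ ≠ 0 := norm_ne_zero_iff.mpr hq
      have h8 : ∀ j, qvec q j = 0 := by
        intro j
        have := h6 j
        simpa [hne, hn] using this
      apply hq
      ext
      · exact h8 0
      · exact h8 1
      · exact h8 2
      · exact h8 3
    rintro (i | i)
    · rw [Subsingleton.elim i 0]; exact h7
    · exact h5 i
  refine ⟨hli, ?_⟩
  have := hli.rank_matrix
  simpa using this
end
end

section
/- Let A ∈ ℝ^{n×n} and B ∈ ℝ^{n×m} be such that the pair (A, B) is controllable, i.e. the n × (nm) controllability matrix [B, AB, A²B, …, A^{n−1}B] has rank n, and let Q ∈ ℝ^{n×n} and R ∈ ℝ^{m×m} be symmetric positive definite. Then there exists a symmetric positive definite matrix P ∈ ℝ^{n×n} satisfying the Algebraic Riccati Equation Q = P B R⁻¹ Bᵀ P − Aᵀ P − P A. -/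
open Matrix

noncomputable section

/-- The controllability matrix `[B, AB, A²B, …, A^{n−1}B]` of the pair `(A, B)`,
with columns indexed by `Fin n × Fin m`. -/
def ctrbMatrix {n m : ℕ} (A : Matrix (Fin n) (Fin n) ℝ) (B : Matrix (Fin n) (Fin m) ℝ) :
    Matrix (Fin n) (Fin n × Fin m) ℝ :=
  Matrix.of fun i p => (A ^ (p.1 : ℕ) * B) i p.2


lemma aux_psd_iff {n : ℕ} {M : Matrix (Fin n) (Fin n) ℝ} :
    M.PosSemidef ↔ Mᵀ = M ∧ ∀ x : Fin n → ℝ, 0 ≤ x ⬝ᵥ (M *ᵥ x) := by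
  rw [posSemidef_iff_dotProduct_mulVec]
  simp [Matrix.IsHermitian]

lemma aux_pd_iff {n : ℕ} {M : Matrix (Fin n) (Fin n) ℝ} :
    M.PosDef ↔ Mᵀ = M ∧ ∀ x : Fin n → ℝ, x ≠ 0 → 0 < x ⬝ᵥ (M *ᵥ x) := by
  rw [posDef_iff_dotProduct_mulVec]
  simp [Matrix.IsHermitian]

lemma aux_psd_ker {n : ℕ} {M : Matrix (Fin n) (Fin n) ℝ} (hM : M.PosSemidef) {x : Fin n → ℝ}
    (h : x ⬝ᵥ (M *ᵥ x) = 0) : M *ᵥ x = 0 := by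
  have := (hM.dotProduct_mulVec_zero_iff x)
  rw [star_trivial] at this
  exact this.1 h

lemma aux_ratio {n : ℕ} (Z X : Matrix (Fin n) (Fin n) ℝ) (hZ : Zᵀ = Z) (hX : X.PosDef) :
    ∃ l : ℝ, (Z - l • X).PosSemidef ∧ (l = 0 ∨ ∃ v, v ≠ 0 ∧ (Z - l • X) *ᵥ v = 0) := by
  obtain ⟨hXs, hXp⟩ := aux_pd_iff.1 hX
  rcases Nat.eq_zero_or_pos n with rfl | hn
  · refine ⟨0, ?_, Or.inl rfl⟩
    rw [Subsingleton.elim (Z - (0:ℝ) • X) 0]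
    exact PosSemidef.zero
  haveI : Nonempty (Fin n) := ⟨⟨0, hn⟩⟩
  have hc : IsCompact (Metric.sphere (0 : Fin n → ℝ) 1) := isCompact_sphere _ _
  have hne : (Metric.sphere (0 : Fin n → ℝ) 1).Nonempty := NormedSpace.sphere_nonempty.2 zero_le_one
  have h0 : ∀ v ∈ Metric.sphere (0 : Fin n → ℝ) 1, v ≠ 0 := by
    intro v hv h
    simp [h] at hv
  have hcont : ContinuousOn (fun v : Fin n → ℝ => (v ⬝ᵥ (Z *ᵥ v)) / (v ⬝ᵥ (X *ᵥ v)))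
      (Metric.sphere (0 : Fin n → ℝ) 1) := by
    apply ContinuousOn.div
    · exact (Continuous.dotProduct continuous_id
        (Continuous.matrix_mulVec continuous_const continuous_id)).continuousOn
    · exact (Continuous.dotProduct continuous_id
        (Continuous.matrix_mulVec continuous_const continuous_id)).continuousOn
    · intro v hv
      exact (hXp v (h0 v hv)).ne'
  obtain ⟨v, hv, hmin⟩ := hc.exists_isMinOn hne hcont
  set l := (v ⬝ᵥ (Z *ᵥ v)) / (v ⬝ᵥ (X *ᵥ v)) with hl
  have hpsd : (Z - l • X).PosSemidef := by
    rw [aux_psd_iff]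
    refine ⟨by simp [hZ, hXs], fun w => ?_⟩
    by_cases hw : w = 0
    · simp [hw]
    have hwn : 0 < ‖w‖ := norm_pos_iff.2 hw
    have hm : (‖w‖⁻¹ • w) ∈ Metric.sphere (0 : Fin n → ℝ) 1 := by
      simp [norm_smul, hwn.ne']
    have h1 := hmin hm
    simp only [Set.mem_setOf_eq, mulVec_smul, smul_dotProduct, dotProduct_smul, smul_eq_mul] at h1
    have hp := hXp w hw
    have hi : 0 < ‖w‖⁻¹ := inv_pos.2 hwn
    rw [← hl, le_div_iff₀ (by positivity)] at h1
    have h2 : l * (w ⬝ᵥ X *ᵥ w) ≤ w ⬝ᵥ Z *ᵥ w := by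
      have : (‖w‖⁻¹ * ‖w‖⁻¹) * (l * (w ⬝ᵥ X *ᵥ w)) ≤ (‖w‖⁻¹ * ‖w‖⁻¹) * (w ⬝ᵥ Z *ᵥ w) := by
        linarith
      exact le_of_mul_le_mul_left this (by positivity)
    simp only [sub_mulVec, smul_mulVec, dotProduct_sub, dotProduct_smul, smul_eq_mul]
    linarith
  refine ⟨l, hpsd, Or.inr ⟨v, h0 v hv, aux_psd_ker hpsd ?_⟩⟩
  simp only [sub_mulVec, smul_mulVec, dotProduct_sub, dotProduct_smul, smul_eq_mul]
  have hp := hXp v (h0 v hv)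
  rw [hl]
  field_simp
  ring

lemma aux_ker_quad {n : ℕ} (F S : Matrix (Fin n) (Fin n) ℝ) (hS : Sᵀ = S) {v : Fin n → ℝ}
    (hv : S *ᵥ v = 0) : v ⬝ᵥ ((F * S + S * Fᵀ) *ᵥ v) = 0 := by
  have h : v ᵥ* S = 0 := by rw [← mulVec_transpose, hS, hv]
  rw [add_mulVec, ← mulVec_mulVec, ← mulVec_mulVec, hv, mulVec_zero, zero_add, dotProduct_mulVec,
    h, zero_dotProduct]

lemma aux_lyap_pos {n : ℕ} (F X Z : Matrix (Fin n) (Fin n) ℝ) (hX : X.PosDef)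
    (hLX : (F * X + X * Fᵀ).PosDef) (hZ : Zᵀ = Z) (hLZ : (F * Z + Z * Fᵀ).PosSemidef) :
    Z.PosSemidef := by
  obtain ⟨l, hl, h⟩ := aux_ratio Z X hZ hX
  have key : 0 ≤ l := by
    by_contra hneg
    push Not at hneg
    rcases h with h | ⟨v, hv0, hv⟩
    · exact absurd h hneg.ne
    have h1 := aux_ker_quad F _ (aux_psd_iff.1 hl).1 hv
    have h2 : F * (Z - l • X) + (Z - l • X) * Fᵀ
        = (F * Z + Z * Fᵀ) - l • (F * X + X * Fᵀ) := by
      simp only [mul_sub, sub_mul, mul_smul_comm, smul_mul_assoc, smul_add]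
      abel
    rw [h2, sub_mulVec, smul_mulVec, dotProduct_sub, dotProduct_smul, smul_eq_mul] at h1
    have h3 := (aux_psd_iff.1 hLZ).2 v
    have h4 := (aux_pd_iff.1 hLX).2 v hv0
    nlinarith
  have := hl.add (hX.posSemidef.smul key)
  simpa using this

lemma aux_lyap_exists {n : ℕ} (F X M : Matrix (Fin n) (Fin n) ℝ) (hX : X.PosDef)
    (hLX : (F * X + X * Fᵀ).PosDef) (hM : Mᵀ = M) :
    ∃ Z : Matrix (Fin n) (Fin n) ℝ, Zᵀ = Z ∧ F * Z + Z * Fᵀ = M := by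
  let S : Submodule ℝ (Matrix (Fin n) (Fin n) ℝ) :=
    { carrier := {Z | Zᵀ = Z}
      add_mem' := by
        intro a b ha hb
        simp only [Set.mem_setOf_eq] at *
        rw [transpose_add, ha, hb]
      zero_mem' := by simp
      smul_mem' := by
        intro c a ha
        simp only [Set.mem_setOf_eq] at *
        rw [transpose_smul, ha] }
  let L : S →ₗ[ℝ] S :=
    { toFun := fun Z => ⟨F * Z.1 + Z.1 * Fᵀ, by
        have hz : (Z.1)ᵀ = Z.1 := Z.2
        change (F * Z.1 + Z.1 * Fᵀ)ᵀ = F * Z.1 + Z.1 * Fᵀ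
        rw [transpose_add, transpose_mul, transpose_mul, transpose_transpose, hz, add_comm]⟩
      map_add' := by
        intro a b
        ext1
        simp only [Submodule.coe_add, mul_add, add_mul]
        abel
      map_smul' := by
        intro c a
        ext1
        simp [mul_smul_comm, smul_mul_assoc, smul_add] }
  have hinj : Function.Injective L := by
    rw [injective_iff_map_eq_zero]
    intro Z hZ
    have h1 : F * Z.1 + Z.1 * Fᵀ = 0 := congrArg Subtype.val hZ
    have hz : (Z.1)ᵀ = Z.1 := Z.2
    have p1 : (Z.1).PosSemidef := aux_lyap_pos F X _ hX hLX hz (by rw [h1]; exact PosSemidef.zero)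
    have p2 : (-Z.1).PosSemidef := aux_lyap_pos F X _ hX hLX (by rw [transpose_neg, hz]) (by
      rw [mul_neg, neg_mul, ← neg_add, h1, neg_zero]; exact PosSemidef.zero)
    ext1
    change Z.1 = 0
    apply Matrix.ext_of_mulVec_single
    intro i
    rw [zero_mulVec]
    apply aux_psd_ker p1
    apply le_antisymm _ ((aux_psd_iff.1 p1).2 _)
    have := (aux_psd_iff.1 p2).2 (Pi.single i 1)
    rw [neg_mulVec, dotProduct_neg] at this
    linarith
  obtain ⟨Z, hZ⟩ := (LinearMap.injective_iff_surjective.1 hinj) ⟨M, hM⟩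
  exact ⟨Z.1, Z.2, congrArg Subtype.val hZ⟩

lemma aux_ctrb {n m : ℕ} (A : Matrix (Fin n) (Fin n) ℝ) (B : Matrix (Fin n) (Fin m) ℝ)
    (hctrb : (ctrbMatrix A B).rank = n) (v : Fin n → ℝ)
    (h : ∀ k : ℕ, Bᵀ *ᵥ ((Aᵀ ^ k) *ᵥ v) = 0) : v = 0 := by
  have hz : v ᵥ* ctrbMatrix A B = 0 := by
    ext ⟨k, j⟩
    have h1 := congrFun (h k) j
    rw [mulVec_mulVec, ← transpose_pow, ← transpose_mul, mulVec_transpose] at h1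
    simpa [vecMul, dotProduct, ctrbMatrix] using h1
  have hli : LinearIndependent ℝ (ctrbMatrix A B).row := by
    rw [linearIndependent_iff_card_eq_finrank_span, Set.finrank, ← rank_eq_finrank_span_row, hctrb,
      Fintype.card_fin]
  have hinj := Matrix.vecMul_injective_iff.2 hli
  exact hinj (by simpa using hz)

/-- The dual Riccati inequality forces positive definiteness. -/
lemma aux_pd_of_ineq {n m : ℕ} (A : Matrix (Fin n) (Fin n) ℝ) (B : Matrix (Fin n) (Fin m) ℝ)
    (hctrb : (ctrbMatrix A B).rank = n)
    (Q : Matrix (Fin n) (Fin n) ℝ) (T : Matrix (Fin m) (Fin m) ℝ) (hT : T.PosDef)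
    (Y : Matrix (Fin n) (Fin n) ℝ) (hY : Y.PosSemidef)
    (hI : (A * Y + Y * Aᵀ + Y * Q * Y - B * T * Bᵀ).PosSemidef) : Y.PosDef := by
  have hYs := (aux_psd_iff.1 hY).1
  have hG : ∀ w : Fin n → ℝ, w ⬝ᵥ ((B * T * Bᵀ) *ᵥ w) = (Bᵀ *ᵥ w) ⬝ᵥ (T *ᵥ (Bᵀ *ᵥ w)) := by
    intro w
    rw [← mulVec_mulVec, ← mulVec_mulVec, dotProduct_mulVec, ← mulVec_transpose]
  have step : ∀ w : Fin n → ℝ, Y *ᵥ w = 0 → Bᵀ *ᵥ w = 0 ∧ Y *ᵥ (Aᵀ *ᵥ w) = 0 := by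
    intro w hw
    have h1 := (aux_psd_iff.1 hI).2 w
    have h2 := aux_ker_quad A Y hYs hw
    have h3 : (Y * Q * Y) *ᵥ w = 0 := by rw [← mulVec_mulVec, hw, mulVec_zero]
    have h4 : w ⬝ᵥ ((A * Y + Y * Aᵀ + Y * Q * Y - B * T * Bᵀ) *ᵥ w)
        = - ((Bᵀ *ᵥ w) ⬝ᵥ (T *ᵥ (Bᵀ *ᵥ w))) := by
      rw [sub_mulVec, add_mulVec _ (Y * Q * Y), h3, add_zero, dotProduct_sub, h2, hG, zero_sub]
    have hB : Bᵀ *ᵥ w = 0 := by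
      by_contra hne
      have := (aux_pd_iff.1 hT).2 _ hne
      linarith
    refine ⟨hB, ?_⟩
    have h5 : (A * Y + Y * Aᵀ + Y * Q * Y - B * T * Bᵀ) *ᵥ w = 0 := by
      apply aux_psd_ker hI
      rw [h4, hB, zero_dotProduct, neg_zero]
    rw [sub_mulVec, add_mulVec _ (Y * Q * Y), h3, add_zero, add_mulVec, ← mulVec_mulVec,
      ← mulVec_mulVec, ← mulVec_mulVec, hw, hB, mulVec_zero, mulVec_zero, zero_add, sub_zero] at h5
    exact h5
  rw [aux_pd_iff]
  refine ⟨hYs, fun v hv => lt_of_le_of_ne ((aux_psd_iff.1 hY).2 v) fun h0 => hv ?_⟩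
  have hk := aux_psd_ker hY h0.symm
  have hall : ∀ k : ℕ, Y *ᵥ ((Aᵀ ^ k) *ᵥ v) = 0 := by
    intro k
    induction k with
    | zero => simpa using hk
    | succ k ih =>
      have := (step _ ih).2
      rwa [mulVec_mulVec v Aᵀ, ← pow_succ'] at this
  exact aux_ctrb A B hctrb v fun k => (step _ (hall k)).1

lemma aux_isClosed_psd {n : ℕ} : IsClosed {M : Matrix (Fin n) (Fin n) ℝ | M.PosSemidef} := by
  have : {M : Matrix (Fin n) (Fin n) ℝ | M.PosSemidef}
      = {M | Mᵀ = M} ∩ ⋂ x : Fin n → ℝ, {M | 0 ≤ x ⬝ᵥ (M *ᵥ x)} := by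
    ext M
    simp [aux_psd_iff]
  rw [this]
  refine IsClosed.inter (isClosed_eq (by fun_prop) (by fun_prop)) (isClosed_iInter fun x => ?_)
  exact isClosed_le continuous_const (Continuous.dotProduct continuous_const
        (Continuous.matrix_mulVec continuous_id continuous_const))

lemma aux_entry_bound {n : ℕ} {M : Matrix (Fin n) (Fin n) ℝ} (hM : M.PosSemidef) (i j : Fin n) :
    |M i j| ≤ M.trace := by
  have hd : ∀ k, 0 ≤ M k k := fun k => hM.diag_nonneg
  have ht : ∀ k, M k k ≤ M.trace := fun k =>
    Finset.single_le_sum (f := fun k => M k k) (fun k _ => hd k) (Finset.mem_univ k)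
  obtain ⟨hs, hq⟩ := aux_psd_iff.1 hM
  have hsij : M j i = M i j := congrFun (congrFun hs i) j
  have h1 := hq (Pi.single i 1 + Pi.single j 1)
  have h2 := hq (Pi.single i 1 - Pi.single j 1)
  simp [mulVec_add, mulVec_sub, add_dotProduct, sub_dotProduct, dotProduct_add, dotProduct_sub,
    hsij] at h1 h2
  rw [abs_le]
  constructor <;> linarith [ht i, ht j]

/-- Solution of the dual Riccati equation. -/
lemma aux_dual {n m : ℕ} (A : Matrix (Fin n) (Fin n) ℝ) (B : Matrix (Fin n) (Fin m) ℝ)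
    (hctrb : (ctrbMatrix A B).rank = n)
    (Q : Matrix (Fin n) (Fin n) ℝ) (T : Matrix (Fin m) (Fin m) ℝ) (hQ : Q.PosDef) (hT : T.PosDef) :
    ∃ Y : Matrix (Fin n) (Fin n) ℝ, Y.PosDef ∧ A * Y + Y * Aᵀ + Y * Q * Y = B * T * Bᵀ := by
  have hQs := (aux_pd_iff.1 hQ).1
  have hTs := (aux_pd_iff.1 hT).1
  set G := B * T * Bᵀ with hGdef
  have hGs : Gᵀ = G := by
    rw [hGdef, transpose_mul, transpose_mul, transpose_transpose, hTs, Matrix.mul_assoc]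
  have hGp : G.PosSemidef := by
    have := hT.posSemidef.mul_mul_conjTranspose_same B
    rwa [conjTranspose_eq_transpose_of_trivial] at this
  -- an initial feasible point
  obtain ⟨Y0, hY0, hI0⟩ : ∃ Y : Matrix (Fin n) (Fin n) ℝ, Y.PosSemidef ∧
      (A * Y + Y * Aᵀ + Y * Q * Y - G).PosSemidef := by
    obtain ⟨l1, h1, -⟩ := aux_ratio (A + Aᵀ) Q (by simp [add_comm]) hQ
    obtain ⟨l2, h2, -⟩ := aux_ratio (-G) Q (by simp [hGs]) hQ
    set c := 1 + |l1| + |l2| with hc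
    have hc0 : 0 ≤ c := by positivity
    refine ⟨c • 1, PosSemidef.one.smul hc0, ?_⟩
    have h3 : 0 ≤ c * l1 + c * c + l2 := by
      have a1 := neg_abs_le l1
      have a2 := neg_abs_le l2
      have a3 := abs_nonneg l1
      have a4 := abs_nonneg l2
      nlinarith
    have h4 := ((h1.smul hc0).add h2).add (hQ.posSemidef.smul h3)
    convert h4 using 1
    simp only [mul_smul_comm, smul_mul_assoc, Matrix.mul_one, Matrix.one_mul, smul_sub, smul_add,
      smul_smul, add_smul]
    abel
  let K : Set (Matrix (Fin n) (Fin n) ℝ) :=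
    {Y | Y.PosSemidef ∧ (A * Y + Y * Aᵀ + Y * Q * Y - G).PosSemidef ∧ Y.trace ≤ Y0.trace}
  have hKclosed : IsClosed K := by
    refine aux_isClosed_psd.inter (IsClosed.inter ?_ ?_)
    · exact aux_isClosed_psd.preimage (f := fun Y => A * Y + Y * Aᵀ + Y * Q * Y - G) (by fun_prop)
    · exact isClosed_le (Continuous.matrix_trace continuous_id) continuous_const
  have hbox : IsCompact (Set.univ.pi fun _ : Fin n => Set.univ.pi fun _ : Fin n =>
      Set.Icc (-Y0.trace) Y0.trace) :=
    isCompact_univ_pi fun _ => isCompact_univ_pi fun _ => isCompact_Icc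
  have hK : IsCompact K := by
    refine IsCompact.of_isClosed_subset hbox hKclosed ?_
    intro Y hY i _ j _
    exact abs_le.1 ((aux_entry_bound hY.1 i j).trans hY.2.2)
  obtain ⟨Y, hYK, hmin⟩ := hK.exists_isMinOn ⟨Y0, hY0, hI0, le_rfl⟩
    (f := fun Y => Y.trace) (Continuous.matrix_trace continuous_id).continuousOn
  obtain ⟨hYp, hYI, hYt⟩ := hYK
  have hYpd := aux_pd_of_ineq A B hctrb Q T hT Y hYp hYI
  have hYs := (aux_psd_iff.1 hYp).1
  refine ⟨Y, hYpd, ?_⟩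
  -- Newton step
  have hFt : (A + Y * Q)ᵀ = Aᵀ + Q * Y := by rw [transpose_add, transpose_mul, hQs, hYs]
  have hYQY : (Y * Q * Y).PosDef := by
    have := hQ.mul_mul_conjTranspose_same (B := Y)
      (by rw [Matrix.vecMul_injective_iff_isUnit]; exact hYpd.isUnit)
    rwa [conjTranspose_eq_transpose_of_trivial, hYs] at this
  have hLY : ((A + Y * Q) * Y + Y * (A + Y * Q)ᵀ).PosDef := by
    have := hYQY.add_posSemidef (hYI.add hGp)
    convert this using 1
    rw [hFt]
    noncomm_ring
  obtain ⟨Z, hZs, hZ⟩ := aux_lyap_exists (A + Y * Q) Y (G + Y * Q * Y) hYpd hLY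
    (by rw [transpose_add, hGs, transpose_mul, transpose_mul, hYs, hQs, Matrix.mul_assoc])
  have hZp : Z.PosSemidef := aux_lyap_pos _ Y Z hYpd hLY hZs (by
    rw [hZ]; exact hGp.add hYQY.posSemidef)
  have hD : (Y - Z).PosSemidef := by
    refine aux_lyap_pos _ Y _ hYpd hLY (by rw [transpose_sub, hYs, hZs]) ?_
    have e : (A + Y * Q) * (Y - Z) + (Y - Z) * (A + Y * Q)ᵀ
        = A * Y + Y * Aᵀ + Y * Q * Y - G := by
      have : (A + Y * Q) * (Y - Z) + (Y - Z) * (A + Y * Q)ᵀ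
        = (A + Y * Q) * Y + Y * (A + Y * Q)ᵀ - ((A + Y * Q) * Z + Z * (A + Y * Q)ᵀ) := by
        noncomm_ring
      rw [this, hZ, hFt]
      noncomm_ring
    rw [e]
    exact hYI
  have hZI : (A * Z + Z * Aᵀ + Z * Q * Z - G).PosSemidef := by
    have h := hQ.posSemidef.mul_mul_conjTranspose_same (Y - Z)
    rw [conjTranspose_eq_transpose_of_trivial, transpose_sub, hYs, hZs] at h
    convert h using 1
    have hG' : G = (A + Y * Q) * Z + Z * (A + Y * Q)ᵀ - Y * Q * Y := by rw [hZ]; abel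
    rw [hG', hFt]
    noncomm_ring
  have htr : 0 ≤ (Y - Z).trace := hD.trace_nonneg
  rw [trace_sub] at htr
  have hle : Y.trace ≤ Z.trace := hmin (show Z ∈ K from ⟨hZp, hZI, by linarith⟩)
  have hDz : Y - Z = 0 := by
    ext i j
    have := aux_entry_bound hD i j
    rw [trace_sub] at this
    have h0 : |(Y - Z) i j| ≤ 0 := by linarith
    simpa using abs_nonpos_iff.1 h0
  have hYZ : Z = Y := (sub_eq_zero.1 hDz).symm
  rw [hYZ, hFt] at hZ
  have : A * Y + Y * Aᵀ + Y * Q * Y = (A + Y * Q) * Y + Y * (Aᵀ + Q * Y) - Y * Q * Y := by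
    noncomm_ring
  rw [this, hZ]
  abel

/-- if the pair `(A, B)` is controllable (the controllability matrix has
rank `n`) and `Q`, `R` are symmetric positive definite, then there exists a symmetric
positive definite `P` solving the Algebraic Riccati Equation
`Q = P B R⁻¹ Bᵀ P − Aᵀ P − P A`. -/
theorem are_solution_exists
    {n m : ℕ} (A : Matrix (Fin n) (Fin n) ℝ) (B : Matrix (Fin n) (Fin m) ℝ)
    (hctrb : (ctrbMatrix A B).rank = n)
    (Q : Matrix (Fin n) (Fin n) ℝ) (R : Matrix (Fin m) (Fin m) ℝ)
    (hQ : Q.PosDef) (hR : R.PosDef) :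
    ∃ P : Matrix (Fin n) (Fin n) ℝ, P.PosDef ∧
      Q = P * B * R⁻¹ * Bᵀ * P - Aᵀ * P - P * A := by
  obtain ⟨Y, hY, hE⟩ := aux_dual A B hctrb Q R⁻¹ hQ hR.inv
  refine ⟨Y⁻¹, hY.inv, ?_⟩
  have hu : IsUnit Y.det := (Matrix.isUnit_iff_isUnit_det Y).1 hY.isUnit
  have h1 : Y⁻¹ * Y = 1 := nonsing_inv_mul Y hu
  have h2 : Y * Y⁻¹ = 1 := mul_nonsing_inv Y hu
  have e : Y⁻¹ * B * R⁻¹ * Bᵀ * Y⁻¹ = Y⁻¹ * (B * R⁻¹ * Bᵀ) * Y⁻¹ := by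
    simp only [Matrix.mul_assoc]
  have e2 : Y⁻¹ * (A * Y + Y * Aᵀ + Y * Q * Y) * Y⁻¹
      = Y⁻¹ * A * (Y * Y⁻¹) + (Y⁻¹ * Y) * Aᵀ * Y⁻¹ + (Y⁻¹ * Y) * Q * (Y * Y⁻¹) := by
    noncomm_ring
  rw [e, ← hE, e2, h1, h2]
  simp only [Matrix.mul_one, Matrix.one_mul]
  abel
end
end
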